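/- arXiv:1210.5709 — 4 statements merged into one kernel-verified Lean document; each statement's English description precedes it below -/
import Mathlib

section
/- The spectrum of the Carleman operator C, as a bounded linear operator on the complex Hilbert space L²((0,∞)), equals the interval [0, π], i.e. spectrum(C) = {λ ∈ ℂ : λ is real and 0 ≤ λ ≤ π}. -/
/-!
The spectrum is confined to `[0, π]` because `0 ≤ C ≤ π` as quadratic forms (`spectrum_subset`).
Positivity comes from `(t + s)⁻¹ = ∫₀^∞ e^{-x(t+s)} dx`, which turns `⟨C f, f⟩` into the squared `L²`
norm of the Laplace transform of `f` (`form_eq_laplace`). The upper bound is Schur's test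
(`schur_test`) with the weight `t ^ (-1/2)`, for which `∫₀^∞ (t + s)⁻¹ s ^ (-1/2) ds = π t ^ (-1/2)`.

Conversely, for `z = 1/2 + iξ` the function `s ^ (z - 1)` just fails to be square integrable and
satisfies the eigenvalue equation with eigenvalue `Γ(z) Γ(1 - z) = π / cosh (π ξ)`
(`stieltjes_integral`, `gamma_eq`). Cut off to `(1, R]` it has squared norm `log R`, while the defect
in the eigenvalue equation is bounded in `L²` uniformly in `R` (`approx_eigenvector`). Hence each
`π / cosh (π ξ)` is in the spectrum. These values fill `(0, π]`, and the spectrum is closed.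
-/

open MeasureTheory Set

noncomputable section

/-- Lebesgue measure restricted to `(0, ∞)`. -/
def mu : Measure ℝ := volume.restrict (Ioi (0 : ℝ))

instance : SFinite mu := by unfold mu; infer_instance

/-! ### The Stieltjes transform of a power -/

lemma ae_pos : ∀ᵐ x ∂mu, 0 < x := ae_restrict_mem measurableSet_Ioi

lemma rpow_exp_integrable {a r : ℝ} (ha : 0 < a) (hr : 0 < r) :
    Integrable (fun s : ℝ => s ^ (a - 1) * Real.exp (-r * s)) mu := by
  have := integrableOn_rpow_mul_exp_neg_mul_rpow (s := a - 1) (p := 1) (b := r)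
    (by linarith) zero_lt_one hr
  simpa [IntegrableOn, mu] using this

lemma norm_cpow_mul_exp {z : ℂ} {s : ℝ} (hs : 0 < s) (c : ℝ) :
    ‖(s : ℂ) ^ (z - 1) * (Real.exp c : ℂ)‖ = s ^ (z.re - 1) * Real.exp c := by
  rw [norm_mul, Complex.norm_cpow_eq_rpow_re_of_pos hs, Complex.norm_real,
    Real.norm_of_nonneg (Real.exp_pos _).le]
  simp

lemma cpow_exp_integrable {z : ℂ} {r : ℝ} (hz : 0 < z.re) (hr : 0 < r) :
    Integrable (fun s : ℝ => (s : ℂ) ^ (z - 1) * (Real.exp (-r * s) : ℂ)) mu := by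
  refine (rpow_exp_integrable hz hr).mono' (by fun_prop) ?_
  filter_upwards [ae_pos] with s hs
  rw [norm_cpow_mul_exp hs]

lemma cpow_exp_integral {z : ℂ} {r : ℝ} (hz : 0 < z.re) (hr : 0 < r) :
    ∫ s : ℝ, (s : ℂ) ^ (z - 1) * (Real.exp (-r * s) : ℂ) ∂mu = (r : ℂ) ^ (-z) * Complex.Gamma z := by
  have := Complex.integral_cpow_mul_exp_neg_mul_Ioi (a := z) (r := r) hz hr
  rw [one_div, Complex.inv_cpow _ _ (by rw [Complex.arg_ofReal_of_nonneg hr.le]; exact Real.pi_pos.ne),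
    ← Complex.cpow_neg] at this
  rw [← this, mu]
  congr 1
  ext s
  push_cast
  ring_nf

lemma exp_integral {r : ℝ} (hr : 0 < r) : ∫ x : ℝ, Real.exp (-r * x) ∂mu = r⁻¹ := by
  have := integral_exp_mul_Ioi (a := -r) (by linarith) 0
  rw [mu, this]; simp

lemma exp_integrable {r : ℝ} (hr : 0 < r) : Integrable (fun x : ℝ => Real.exp (-r * x)) mu :=
  exp_neg_integrableOn_Ioi 0 hr

/-- Absolute convergence of the double integral behind `stieltjes_integral`, which writes
`(t + s)⁻¹` as `∫₀^∞ e^{-(t+s)x} dx`; the first coordinate of `p` is `x`, the second is `s`. -/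
lemma stieltjes_aux {z : ℂ} (h0 : 0 < z.re) (h1 : z.re < 1) {t : ℝ} (ht : 0 < t) :
    Integrable (fun p : ℝ × ℝ => (p.2 : ℂ) ^ (z - 1) * (Real.exp (-(t + p.2) * p.1) : ℂ))
      (mu.prod mu) := by
  rw [integrable_prod_iff (by fun_prop)]
  constructor
  · filter_upwards [ae_pos] with x hx
    refine ((cpow_exp_integrable h0 hx).mul_const (Real.exp (-t * x) : ℂ)).congr ?_
    refine .of_forall fun s => ?_
    dsimp only
    rw [mul_assoc, ← Complex.ofReal_mul, ← Real.exp_add]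
    ring_nf
  · have key := (rpow_exp_integrable (a := 1 - z.re) (by linarith) ht).mul_const
      (Real.Gamma z.re)
    refine key.congr ?_
    filter_upwards [ae_pos] with x hx
    have : ∫ s, ‖(s : ℂ) ^ (z - 1) * (Real.exp (-(t + s) * x) : ℂ)‖ ∂mu
        = ∫ s, Real.exp (-t * x) * (s ^ (z.re - 1) * Real.exp (-(x * s))) ∂mu := by
      refine integral_congr_ae ?_
      filter_upwards [ae_pos] with s hs
      rw [norm_cpow_mul_exp hs, mul_left_comm, ← Real.exp_add]
      ring_nf
    rw [this, integral_const_mul, mu, Real.integral_rpow_mul_exp_neg_mul_Ioi h0 hx, one_div,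
      Real.inv_rpow hx.le, ← Real.rpow_neg hx.le]
    ring_nf

lemma stieltjes_inner {z : ℂ} {t s : ℝ} (ht : 0 < t) (hs : 0 < s) :
    ∫ x, (s : ℂ) ^ (z - 1) * (Real.exp (-(t + s) * x) : ℂ) ∂mu
      = ((t + s)⁻¹ : ℝ) • (s : ℂ) ^ (z - 1) := by
  rw [integral_const_mul, integral_complex_ofReal, exp_integral (by positivity), mul_comm]
  rfl

lemma stieltjes_integrable {z : ℂ} (h0 : 0 < z.re) (h1 : z.re < 1) {t : ℝ} (ht : 0 < t) :
    Integrable (fun s : ℝ => ((t + s)⁻¹ : ℝ) • (s : ℂ) ^ (z - 1)) mu := by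
  refine (stieltjes_aux h0 h1 ht).integral_prod_right.congr ?_
  filter_upwards [ae_pos] with s hs using stieltjes_inner ht hs

/-- The powers `s ↦ s ^ (z - 1)` with `0 < re z < 1` are generalized eigenfunctions of the Carleman
kernel, with eigenvalue `Γ(z) Γ(1 - z)`. They are not square integrable. -/
lemma stieltjes_integral {z : ℂ} (h0 : 0 < z.re) (h1 : z.re < 1) {t : ℝ} (ht : 0 < t) :
    ∫ s : ℝ, ((t + s)⁻¹ : ℝ) • (s : ℂ) ^ (z - 1) ∂mu
      = Complex.Gamma z * Complex.Gamma (1 - z) * (t : ℂ) ^ (z - 1) := by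
  have hsw := integral_integral_swap
    (f := fun x s : ℝ => (s : ℂ) ^ (z - 1) * (Real.exp (-(t + s) * x) : ℂ)) (stieltjes_aux h0 h1 ht)
  have hR : ∫ s : ℝ, ((t + s)⁻¹ : ℝ) • (s : ℂ) ^ (z - 1) ∂mu
      = ∫ s, ∫ x, (s : ℂ) ^ (z - 1) * (Real.exp (-(t + s) * x) : ℂ) ∂mu ∂mu := by
    refine integral_congr_ae ?_
    filter_upwards [ae_pos] with s hs using (stieltjes_inner ht hs).symm
  rw [hR, ← hsw]
  have hL : ∀ᵐ x ∂mu, ∫ s, (s : ℂ) ^ (z - 1) * (Real.exp (-(t + s) * x) : ℂ) ∂mu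
      = Complex.Gamma z * ((x : ℂ) ^ ((1 - z) - 1) * (Real.exp (-t * x) : ℂ)) := by
    filter_upwards [ae_pos] with x hx
    have : ∀ s : ℝ, (s : ℂ) ^ (z - 1) * (Real.exp (-(t + s) * x) : ℂ)
        = (Real.exp (-t * x) : ℂ) * ((s : ℂ) ^ (z - 1) * (Real.exp (-x * s) : ℂ)) := by
      intro s
      rw [mul_left_comm, ← Complex.ofReal_mul, ← Real.exp_add]
      ring_nf
    simp_rw [this]
    rw [integral_const_mul, cpow_exp_integral h0 hx]
    ring_nf
  rw [integral_congr_ae hL, integral_const_mul, cpow_exp_integral (by simpa using h1) ht]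
  ring_nf

/-- Euler's reflection formula on the line `re z = 1/2`: the eigenvalues are `π / cosh (π ξ)`. -/
lemma gamma_eq (ξ : ℝ) : Complex.Gamma (1 / 2 + ξ * Complex.I) *
    Complex.Gamma (1 - (1 / 2 + ξ * Complex.I)) = ((Real.pi / Real.cosh (Real.pi * ξ) : ℝ) : ℂ) := by
  rw [Complex.Gamma_mul_Gamma_one_sub]
  have : (Real.pi : ℂ) * (1 / 2 + ξ * Complex.I) = Real.pi * ξ * Complex.I + Real.pi / 2 := by ring
  rw [this, Complex.sin_add_pi_div_two, Complex.cos_mul_I]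
  push_cast
  rfl

/-- The real eigenfunction `s ↦ s ^ (-1/2)`, with eigenvalue `π`, serves as the weight in Schur's
test. -/
lemma schur_integral {t : ℝ} (ht : 0 < t) :
    Integrable (fun s : ℝ => (t + s)⁻¹ * s ^ (-(1 / 2) : ℝ)) mu ∧
    ∫ s : ℝ, (t + s)⁻¹ * s ^ (-(1 / 2) : ℝ) ∂mu = Real.pi * t ^ (-(1 / 2) : ℝ) := by
  have e : ∀ s : ℝ, 0 < s → ((s : ℂ) ^ ((1 / 2 : ℂ) - 1)) = ((s ^ (-(1 / 2) : ℝ) : ℝ) : ℂ) := by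
    intro s hs
    rw [Complex.ofReal_cpow hs.le]; norm_num
  have e2 : (fun s : ℝ => ((t + s)⁻¹ : ℝ) • (s : ℂ) ^ ((1 / 2 : ℂ) - 1)) =ᵐ[mu]
      fun s => (((t + s)⁻¹ * s ^ (-(1 / 2) : ℝ) : ℝ) : ℂ) := by
    filter_upwards [ae_pos] with s hs
    rw [e s hs, Complex.real_smul]; push_cast; rfl
  have h0 : 0 < (1 / 2 : ℂ).re := by norm_num
  have h1 : (1 / 2 : ℂ).re < 1 := by norm_num
  constructor
  · have := ((stieltjes_integrable h0 h1 ht).congr e2).re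
    simpa only [RCLike.re_to_complex, Complex.ofReal_re] using this
  · have := stieltjes_integral h0 h1 ht
    have g := gamma_eq 0
    simp only [Complex.ofReal_zero, zero_mul, add_zero, mul_zero, Real.cosh_zero, div_one] at g
    rw [g, integral_congr_ae e2, integral_complex_ofReal, e t ht, ← Complex.ofReal_mul] at this
    exact_mod_cast this

/-! ### The quadratic form of the Carleman operator -/

lemma ae_pos_prod : ∀ᵐ p ∂(mu.prod mu), 0 < p.1 ∧ 0 < p.2 :=
  (Measure.quasiMeasurePreserving_fst.ae ae_pos).and (Measure.quasiMeasurePreserving_snd.ae ae_pos)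

lemma weighted_amgm {a b q : ℝ} (hq : 0 < q) : a * b ≤ (a ^ 2 * q + b ^ 2 * q⁻¹) / 2 := by
  have h : 0 ≤ (a * q - b) ^ 2 * q⁻¹ := by positivity
  have : (a * q - b) ^ 2 * q⁻¹ = a ^ 2 * q - 2 * (a * b) + b ^ 2 * q⁻¹ := by
    have hqi : q * q⁻¹ = 1 := mul_inv_cancel₀ hq.ne'
    linear_combination (a ^ 2 * q - 2 * a * b) * hqi
  linarith

/-- One of the two mirror-image terms dominating the quadratic form in Schur's test:
`‖f(t)‖² (t/s)^{1/2} / (t + s)` at `p = (t, s)`. -/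
def schurDensity (f : ℝ → ℂ) (p : ℝ × ℝ) : ℝ :=
  ‖f p.1‖ ^ 2 * p.1 ^ (1 / 2 : ℝ) * ((p.1 + p.2)⁻¹ * p.2 ^ (-(1 / 2) : ℝ))

lemma schurDensity_integrable {f : ℝ → ℂ} (hm : AEStronglyMeasurable f mu)
    (hf : Integrable (fun t => ‖f t‖ ^ 2) mu) :
    Integrable (schurDensity f) (mu.prod mu) ∧
    ∫ p, schurDensity f p ∂(mu.prod mu) = Real.pi * ∫ t, ‖f t‖ ^ 2 ∂mu := by
  have inner : ∀ t, 0 < t → ∫ s, schurDensity f (t, s) ∂mu = Real.pi * ‖f t‖ ^ 2 := by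
    intro t ht
    simp only [schurDensity]
    rw [integral_const_mul, (schur_integral ht).2]
    have : t ^ (1 / 2 : ℝ) * t ^ (-(1 / 2) : ℝ) = 1 := by
      rw [← Real.rpow_add ht]; norm_num
    linear_combination (‖f t‖ ^ 2 * Real.pi) * this
  have hmeas : AEStronglyMeasurable (schurDensity f) (mu.prod mu) := by
    have h1 : AEStronglyMeasurable (fun p : ℝ × ℝ => f p.1) (mu.prod mu) := hm.comp_fst
    have h2 : AEStronglyMeasurable (fun p : ℝ × ℝ => p.1 ^ (1 / 2 : ℝ)) (mu.prod mu) :=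
      (measurable_fst.pow_const _).aestronglyMeasurable
    have h3 : AEStronglyMeasurable (fun p : ℝ × ℝ => ((p.1 + p.2)⁻¹ * p.2 ^ (-(1 / 2) : ℝ)))
      (mu.prod mu) := by fun_prop
    exact ((h1.norm.pow 2).mul h2).mul h3
  have hint : Integrable (schurDensity f) (mu.prod mu) := by
    rw [integrable_prod_iff hmeas]
    constructor
    · filter_upwards [ae_pos] with t ht
      exact (schur_integral ht).1.const_mul (‖f t‖ ^ 2 * t ^ (1 / 2 : ℝ))
    · refine (hf.const_mul Real.pi).congr ?_
      filter_upwards [ae_pos] with t ht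
      rw [← inner t ht]
      refine integral_congr_ae ?_
      filter_upwards [ae_pos] with s hs
      rw [Real.norm_of_nonneg]
      unfold schurDensity
      positivity
  refine ⟨hint, ?_⟩
  rw [integral_prod _ hint, ← integral_const_mul]
  refine integral_congr_ae ?_
  filter_upwards [ae_pos] with t ht using inner t ht

/-- Schur's test for the kernel `1 / (t + s)`: its quadratic form is absolutely convergent and
bounded by `π` times the squared norm. -/
lemma schur_test {f : ℝ → ℂ} (hm : AEStronglyMeasurable f mu)
    (hf : Integrable (fun t => ‖f t‖ ^ 2) mu) :
    Integrable (fun p : ℝ × ℝ => (p.1 + p.2)⁻¹ * (‖f p.1‖ * ‖f p.2‖)) (mu.prod mu) ∧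
    ∫ p : ℝ × ℝ, (p.1 + p.2)⁻¹ * (‖f p.1‖ * ‖f p.2‖) ∂(mu.prod mu)
      ≤ Real.pi * ∫ t, ‖f t‖ ^ 2 ∂mu := by
  obtain ⟨hi, he⟩ := schurDensity_integrable hm hf
  have hi' : Integrable (fun p => schurDensity f p.swap) (mu.prod mu) := hi.swap
  have hG := (hi.add hi').div_const 2
  have hle : ∀ᵐ p ∂(mu.prod mu), (p.1 + p.2)⁻¹ * (‖f p.1‖ * ‖f p.2‖)
      ≤ (schurDensity f p + schurDensity f p.swap) / 2 := by
    filter_upwards [ae_pos_prod] with p hp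
    obtain ⟨h1, h2⟩ := hp
    -- weighted AM-GM with `q = (t / s) ^ (1/2)`
    have hq : 0 < p.1 ^ (1 / 2 : ℝ) * p.2 ^ (-(1 / 2) : ℝ) := by positivity
    have := mul_le_mul_of_nonneg_left (weighted_amgm (a := ‖f p.1‖) (b := ‖f p.2‖) hq)
      (inv_pos.2 (add_pos h1 h2)).le
    refine this.trans_eq ?_
    rw [mul_inv, ← Real.rpow_neg h1.le, ← Real.rpow_neg h2.le, neg_neg]
    simp only [schurDensity, Prod.fst_swap, Prod.snd_swap, add_comm p.2 p.1]
    ring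
  have hK : Integrable (fun p : ℝ × ℝ => (p.1 + p.2)⁻¹ * (‖f p.1‖ * ‖f p.2‖)) (mu.prod mu) := by
    refine hG.mono' ?_ ?_
    · have h1 : AEStronglyMeasurable (fun p : ℝ × ℝ => f p.1) (mu.prod mu) := hm.comp_fst
      have h2 : AEStronglyMeasurable (fun p : ℝ × ℝ => f p.2) (mu.prod mu) := hm.comp_snd
      have h3 : AEStronglyMeasurable (fun p : ℝ × ℝ => (p.1 + p.2)⁻¹) (mu.prod mu) := by fun_prop
      exact h3.mul (h1.norm.mul h2.norm)
    · filter_upwards [ae_pos_prod, hle] with p hp h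
      obtain ⟨h1, h2⟩ := hp
      rw [Real.norm_of_nonneg (by positivity)]
      exact h
  refine ⟨hK, (integral_mono_ae hK hG hle).trans_eq ?_⟩
  simp only [Pi.add_apply]
  rw [integral_div, integral_add hi hi', integral_prod_swap, he]
  ring

/-- The quadratic form of the Carleman kernel is the squared norm of the Laplace transform, because
`(t + s)⁻¹ = ∫₀^∞ e^{-x(t+s)} dx`. -/
lemma form_eq_laplace {f : ℝ → ℂ} (hm : AEStronglyMeasurable f mu)
    (hf : Integrable (fun t => ‖f t‖ ^ 2) mu) :
    ∫ p : ℝ × ℝ, ((p.1 + p.2)⁻¹ : ℝ) • (f p.1 * (starRingEnd ℂ) (f p.2)) ∂(mu.prod mu)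
      = ((∫ x, ‖∫ t, (Real.exp (-x * t) : ℂ) * f t ∂mu‖ ^ 2 ∂mu : ℝ) : ℂ) := by
  have h1 : AEStronglyMeasurable (fun p : ℝ × ℝ => f p.1 * (starRingEnd ℂ) (f p.2)) (mu.prod mu) :=
    hm.comp_fst.mul (Complex.continuous_conj.comp_aestronglyMeasurable hm.comp_snd)
  have hΦ : Integrable (fun q : ℝ × (ℝ × ℝ) => (Real.exp (-(q.2.1 + q.2.2) * q.1) : ℂ) *
      (f q.2.1 * (starRingEnd ℂ) (f q.2.2))) (mu.prod (mu.prod mu)) := by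
    have h2 : AEStronglyMeasurable
      (fun q : ℝ × (ℝ × ℝ) => (Real.exp (-(q.2.1 + q.2.2) * q.1) : ℂ)) (mu.prod (mu.prod mu)) := by
      fun_prop
    have h3 : AEStronglyMeasurable (fun q : ℝ × (ℝ × ℝ) =>
        (Real.exp (-(q.2.1 + q.2.2) * q.1) : ℂ) * (f q.2.1 * (starRingEnd ℂ) (f q.2.2)))
        (mu.prod (mu.prod mu)) := h2.mul h1.comp_snd
    rw [integrable_prod_iff' h3]
    constructor
    · filter_upwards [ae_pos_prod] with p hp
      exact (exp_integrable (add_pos hp.1 hp.2)).ofReal.mul_const _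
    · refine (schur_test hm hf).1.congr ?_
      filter_upwards [ae_pos_prod] with p hp
      simp only [norm_mul, Complex.norm_real, Real.norm_of_nonneg (Real.exp_pos _).le,
        RCLike.norm_conj]
      rw [integral_mul_const, exp_integral (add_pos hp.1 hp.2)]
  have hsw := integral_integral_swap
    (f := fun (x : ℝ) (p : ℝ × ℝ) => (Real.exp (-(p.1 + p.2) * x) : ℂ) *
      (f p.1 * (starRingEnd ℂ) (f p.2))) hΦ
  have hR : ∫ p : ℝ × ℝ, ((p.1 + p.2)⁻¹ : ℝ) • (f p.1 * (starRingEnd ℂ) (f p.2)) ∂(mu.prod mu)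
      = ∫ p : ℝ × ℝ, ∫ x, (Real.exp (-(p.1 + p.2) * x) : ℂ) *
      (f p.1 * (starRingEnd ℂ) (f p.2)) ∂mu ∂(mu.prod mu) := by
    refine integral_congr_ae ?_
    filter_upwards [ae_pos_prod] with p hp
    rw [integral_mul_const, integral_complex_ofReal, exp_integral (add_pos hp.1 hp.2)]
    rfl
  rw [hR, ← hsw, ← integral_complex_ofReal]
  congr 1
  ext x
  have : ∀ p : ℝ × ℝ, (Real.exp (-(p.1 + p.2) * x) : ℂ) * (f p.1 * (starRingEnd ℂ) (f p.2))
      = ((Real.exp (-x * p.1) : ℂ) * f p.1) *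
        (starRingEnd ℂ) ((Real.exp (-x * p.2) : ℂ) * f p.2) := by
    intro p
    rw [map_mul, Complex.conj_ofReal, mul_mul_mul_comm, ← Complex.ofReal_mul, ← Real.exp_add]
    ring_nf
  simp_rw [this]
  rw [integral_prod_mul (fun t => (Real.exp (-x * t) : ℂ) * f t)
    (fun t => (starRingEnd ℂ) ((Real.exp (-x * t) : ℂ) * f t)), integral_conj, Complex.mul_conj,
    Complex.normSq_eq_norm_sq]

lemma integrable_norm_sq (f : Lp ℂ 2 mu) : Integrable (fun t => ‖f t‖ ^ 2) mu :=
  (memLp_two_iff_integrable_sq_norm (Lp.aestronglyMeasurable f)).1 (Lp.memLp f)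

lemma norm_sq_eq (f : Lp ℂ 2 mu) : ‖f‖ ^ 2 = ∫ t, ‖f t‖ ^ 2 ∂mu := by
  have h : inner ℂ f f = ((∫ t, ‖f t‖ ^ 2 ∂mu : ℝ) : ℂ) := by
    rw [L2.inner_def, ← integral_complex_ofReal]
    congr 1
    ext t
    rw [inner_self_eq_norm_sq_to_K]
    push_cast
    rfl
  rw [inner_self_eq_norm_sq_to_K] at h
  exact Complex.ofReal_injective (by rw [← h]; push_cast; rfl)

lemma inner_carleman (C : Lp ℂ 2 mu →L[ℂ] Lp ℂ 2 mu)
    (hC : ∀ f : Lp ℂ 2 mu,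
      (C f : ℝ → ℂ) =ᵐ[mu] fun t => ∫ s in Ioi (0 : ℝ), ((t + s)⁻¹ : ℝ) • f s)
    (f : Lp ℂ 2 mu) : inner ℂ (C f) f =
      ∫ p : ℝ × ℝ, ((p.1 + p.2)⁻¹ : ℝ) • (f p.1 * (starRingEnd ℂ) (f p.2)) ∂(mu.prod mu) := by
  have hm := Lp.aestronglyMeasurable f
  have hi : Integrable (fun p : ℝ × ℝ => ((p.1 + p.2)⁻¹ : ℝ) • (f p.1 * (starRingEnd ℂ) (f p.2)))
      (mu.prod mu) := by
    refine (schur_test hm (integrable_norm_sq f)).1.mono' ?_ ?_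
    · have h1 : AEStronglyMeasurable (fun p : ℝ × ℝ => f p.1 * (starRingEnd ℂ) (f p.2))
        (mu.prod mu) := hm.comp_fst.mul (Complex.continuous_conj.comp_aestronglyMeasurable hm.comp_snd)
      have h3 : AEStronglyMeasurable (fun p : ℝ × ℝ => (p.1 + p.2)⁻¹) (mu.prod mu) := by fun_prop
      exact h3.smul h1
    · filter_upwards [ae_pos_prod] with p hp
      obtain ⟨h1, h2⟩ := hp
      rw [norm_smul, norm_mul, RCLike.norm_conj, Real.norm_of_nonneg (by positivity)]
  rw [integral_prod _ hi, L2.inner_def]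
  refine integral_congr_ae ?_
  filter_upwards [hC f] with t ht
  rw [ht, RCLike.inner_apply, ← integral_conj, ← integral_const_mul]
  refine integral_congr_ae (.of_forall fun s => ?_)
  simp only [Complex.real_smul, map_mul, Complex.conj_ofReal]
  ring

open scoped ComplexOrder in
/-- The Carleman operator satisfies `0 ≤ C ≤ π`, which confines its spectrum to `[0, π]`. -/
lemma spectrum_subset (C : Lp ℂ 2 mu →L[ℂ] Lp ℂ 2 mu)
    (hC : ∀ f : Lp ℂ 2 mu,
      (C f : ℝ → ℂ) =ᵐ[mu] fun t => ∫ s in Ioi (0 : ℝ), ((t + s)⁻¹ : ℝ) • f s)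
    {z : ℂ} (hz : z ∈ spectrum ℂ C) : ∃ r : ℝ, z = (r : ℂ) ∧ 0 ≤ r ∧ r ≤ Real.pi := by
  have form : ∀ f : Lp ℂ 2 mu, ∃ q : ℝ, inner ℂ (C f) f = (q : ℂ) ∧ 0 ≤ q ∧
      q ≤ Real.pi * ‖f‖ ^ 2 := by
    intro f
    have hm := Lp.aestronglyMeasurable f
    refine ⟨∫ x, ‖∫ t, (Real.exp (-x * t) : ℂ) * f t ∂mu‖ ^ 2 ∂mu, ?_, ?_, ?_⟩
    · rw [inner_carleman C hC, form_eq_laplace hm (integrable_norm_sq f)]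
    · positivity
    · have h := form_eq_laplace hm (integrable_norm_sq f)
      refine (le_abs_self _).trans ?_
      rw [← Real.norm_eq_abs, ← Complex.norm_real, ← h, norm_sq_eq]
      refine (norm_integral_le_integral_norm _).trans
        (le_trans (le_of_eq ?_) (schur_test hm (integrable_norm_sq f)).2)
      refine integral_congr_ae ?_
      filter_upwards [ae_pos_prod] with p hp
      obtain ⟨h1, h2⟩ := hp
      rw [norm_smul, norm_mul, RCLike.norm_conj, Real.norm_of_nonneg (by positivity)]
  have h0 : C.IsPositive := by
    rw [ContinuousLinearMap.isPositive_iff_complex]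
    intro f
    obtain ⟨q, h, hq, -⟩ := form f
    rw [h]
    exact ⟨by simp, by simpa using hq⟩
  have h1 : (algebraMap ℂ (Lp ℂ 2 mu →L[ℂ] Lp ℂ 2 mu) (Real.pi : ℂ) - C).IsPositive := by
    rw [ContinuousLinearMap.isPositive_iff_complex]
    intro f
    obtain ⟨q, h, -, hq⟩ := form f
    have : inner ℂ ((algebraMap ℂ (Lp ℂ 2 mu →L[ℂ] Lp ℂ 2 mu) (Real.pi : ℂ) - C) f) f
        = ((Real.pi * ‖f‖ ^ 2 - q : ℝ) : ℂ) := by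
      rw [sub_apply, inner_sub_left, h, ContinuousLinearMap.algebraMap_apply,
        inner_smul_left, inner_self_eq_norm_sq_to_K, Complex.conj_ofReal]
      push_cast
      rfl
    have hq' := sub_nonneg.2 hq
    rw [this]
    generalize Real.pi * ‖f‖ ^ 2 - q = y at hq' ⊢
    exact ⟨by simp, by simpa using hq'⟩
  have a0 : 0 ≤ z := spectrum_nonneg_of_nonneg
    ((ContinuousLinearMap.nonneg_iff_isPositive _).2 h0) hz
  have a1 : 0 ≤ (Real.pi : ℂ) - z := by
    refine spectrum_nonneg_of_nonneg ((ContinuousLinearMap.nonneg_iff_isPositive _).2 h1) ?_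
    rw [← spectrum.singleton_sub_eq]
    exact Set.sub_mem_sub rfl hz
  rw [Complex.le_def] at a0 a1
  refine ⟨z.re, Complex.ext rfl ?_, a0.1, ?_⟩
  · simpa using a0.2.symm
  · simpa using a1.1

/-! ### Approximate eigenvectors -/

lemma integral_div_add_sq {c : ℝ} (hc : 0 < c) :
    Integrable (fun t : ℝ => c / (c + t) ^ 2) mu ∧ ∫ t : ℝ, c / (c + t) ^ 2 ∂mu = 1 := by
  have hd : ∀ t ∈ Ici (0 : ℝ), HasDerivAt (fun t : ℝ => -(c / (c + t))) (c / (c + t) ^ 2) t := by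
    intro t ht
    have h : c + t ≠ 0 := (add_pos_of_pos_of_nonneg hc ht).ne'
    have := (((hasDerivAt_id t).const_add c).inv h).const_mul (-c)
    refine (this.congr_deriv ?_).congr_of_eventuallyEq (.of_forall fun s => ?_)
    · simp only [id]; ring
    · simp only [Pi.inv_apply, id]; ring
  have hp : ∀ t ∈ Ioi (0 : ℝ), 0 ≤ c / (c + t) ^ 2 := fun t _ => by positivity
  have hl : Filter.Tendsto (fun t : ℝ => -(c / (c + t))) Filter.atTop (nhds 0) := by
    have := (Filter.Tendsto.const_div_atTop
      (Filter.tendsto_atTop_add_const_left _ c Filter.tendsto_id) c).neg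
    simpa using this
  refine ⟨integrableOn_Ioi_deriv_of_nonneg' hd hp hl, ?_⟩
  have := integral_Ioi_of_hasDerivAt_of_nonneg' hd hp hl
  rw [mu, this]
  simp [hc.ne']

lemma norm_kernel {z : ℂ} (hz : z.re = 1 / 2) {t s : ℝ} (ht : 0 < t) (hs : 0 < s) :
    ‖((t + s)⁻¹ : ℝ) • (s : ℂ) ^ (z - 1)‖ = (t + s)⁻¹ * s ^ (-(1 / 2) : ℝ) := by
  rw [norm_smul, Complex.norm_cpow_eq_rpow_re_of_pos hs, Real.norm_of_nonneg (by positivity)]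
  norm_num [hz]

lemma norm_integral_near_zero {z : ℂ} (hz : z.re = 1 / 2) {t a : ℝ} (ht : 0 < t) (ha : 0 < a)
    {S : Set ℝ} (hSm : MeasurableSet S) (hS : S ⊆ Ioc 0 a) :
    ‖∫ s in S, ((t + s)⁻¹ : ℝ) • (s : ℂ) ^ (z - 1)‖ ≤ 2 * √a / t := by
  have hi : IntegrableOn (fun s : ℝ => t⁻¹ * s ^ (-(1 / 2) : ℝ)) (Ioc 0 a) := by
    rw [← intervalIntegrable_iff_integrableOn_Ioc_of_le ha.le]
    exact (intervalIntegral.intervalIntegrable_rpow' (by norm_num)).const_mul _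
  calc _ ≤ ∫ s in S, t⁻¹ * s ^ (-(1 / 2) : ℝ) := by
        refine norm_integral_le_of_norm_le (hi.mono_set hS) ?_
        filter_upwards [ae_restrict_mem hSm] with s hs
        have hs0 : 0 < s := (hS hs).1
        rw [norm_kernel hz ht hs0]
        gcongr
        linarith
    _ ≤ ∫ s in Ioc 0 a, t⁻¹ * s ^ (-(1 / 2) : ℝ) := by
        refine setIntegral_mono_set hi ?_ hS.eventuallyLE
        filter_upwards [ae_restrict_mem measurableSet_Ioc] with s hs
        have hs0 : 0 < s := hs.1
        simp only [Pi.zero_apply]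
        positivity
    _ = 2 * √a / t := by
        rw [integral_const_mul, ← intervalIntegral.integral_of_le ha.le,
          integral_rpow (Or.inl (by norm_num)), Real.sqrt_eq_rpow]
        norm_num
        ring

lemma norm_integral_near_top {z : ℂ} (hz : z.re = 1 / 2) {t b : ℝ} (ht : 0 < t) (hb : 0 < b)
    {S : Set ℝ} (hSm : MeasurableSet S) (hS : S ⊆ Ioi b) :
    ‖∫ s in S, ((t + s)⁻¹ : ℝ) • (s : ℂ) ^ (z - 1)‖ ≤ 2 / √b := by
  have hi : IntegrableOn (fun s : ℝ => s ^ (-(3 / 2) : ℝ)) (Ioi b) :=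
    integrableOn_Ioi_rpow_of_lt (by norm_num) hb
  calc _ ≤ ∫ s in S, s ^ (-(3 / 2) : ℝ) := by
        refine norm_integral_le_of_norm_le (hi.mono_set hS) ?_
        filter_upwards [ae_restrict_mem hSm] with s hs
        have hs0 : 0 < s := hb.trans (hS hs)
        have e : s ^ (-(3 / 2) : ℝ) = s⁻¹ * s ^ (-(1 / 2) : ℝ) := by
          rw [← Real.rpow_neg_one, ← Real.rpow_add hs0]; norm_num
        rw [norm_kernel hz ht hs0, e]
        gcongr
        linarith
    _ ≤ ∫ s in Ioi b, s ^ (-(3 / 2) : ℝ) := by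
        refine setIntegral_mono_set hi ?_ hS.eventuallyLE
        filter_upwards [ae_restrict_mem measurableSet_Ioi] with s hs
        have hs0 : 0 < s := hb.trans hs
        simp only [Pi.zero_apply]
        positivity
    _ = 2 / √b := by
        rw [integral_Ioi_rpow_of_lt (by norm_num) hb, Real.sqrt_eq_rpow, div_eq_mul_inv 2,
          ← Real.rpow_neg hb.le]
        norm_num
        ring

/-- The generalized eigenfunction `s ↦ s ^ (z - 1)` of the Carleman operator, cut off to `(1, R]`. -/
def cutoff (z : ℂ) (R : ℝ) : ℝ → ℂ := (Ioc 1 R).indicator fun s => (s : ℂ) ^ (z - 1)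

lemma cutoff_measurable (z : ℂ) (R : ℝ) : Measurable (cutoff z R) := by
  refine Measurable.indicator ?_ measurableSet_Ioc
  fun_prop

lemma cutoff_norm_sq {z : ℂ} (hz : z.re = 1 / 2) (R s : ℝ) :
    ‖cutoff z R s‖ ^ 2 = (Ioc 1 R).indicator (fun s => s⁻¹) s := by
  by_cases hs : s ∈ Ioc 1 R
  · have hs0 : 0 < s := zero_lt_one.trans hs.1
    rw [cutoff, indicator_of_mem hs, indicator_of_mem hs, Complex.norm_cpow_eq_rpow_re_of_pos hs0,
      ← Real.rpow_natCast, ← Real.rpow_mul hs0.le, ← Real.rpow_neg_one]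
    norm_num [hz]
  · rw [cutoff, indicator_of_notMem hs, indicator_of_notMem hs]
    simp

lemma mu_restrict {S : Set ℝ} (hm : MeasurableSet S) (hS : S ⊆ Ioi 0) :
    mu.restrict S = volume.restrict S := by
  rw [mu, Measure.restrict_restrict hm, inter_eq_left.2 hS]

lemma Ioc_subset_pos {R : ℝ} : Ioc 1 R ⊆ Ioi 0 := fun _ hs => zero_lt_one.trans hs.1

lemma cutoff_integral_norm_sq {z : ℂ} (hz : z.re = 1 / 2) {R : ℝ} (hR : 1 ≤ R) :
    Integrable (fun s => ‖cutoff z R s‖ ^ 2) mu ∧ ∫ s, ‖cutoff z R s‖ ^ 2 ∂mu = Real.log R := by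
  have h0 : (0 : ℝ) ∉ uIcc 1 R := by
    rw [uIcc_of_le hR]; intro h; linarith [h.1]
  simp_rw [cutoff_norm_sq hz]
  constructor
  · rw [integrable_indicator_iff measurableSet_Ioc, IntegrableOn,
      mu_restrict measurableSet_Ioc Ioc_subset_pos, ← IntegrableOn,
      ← intervalIntegrable_iff_integrableOn_Ioc_of_le hR]
    exact intervalIntegral.intervalIntegrable_inv (fun x hx h => h0 (h ▸ hx)) continuousOn_id
  · rw [integral_indicator measurableSet_Ioc, mu_restrict measurableSet_Ioc Ioc_subset_pos,
      ← intervalIntegral.integral_of_le hR, integral_inv h0, div_one]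

lemma cutoff_memLp {z : ℂ} (hz : z.re = 1 / 2) {R : ℝ} (hR : 1 ≤ R) :
    MemLp (cutoff z R) 2 mu :=
  (memLp_two_iff_integrable_sq_norm (cutoff_measurable z R).aestronglyMeasurable).2
    (cutoff_integral_norm_sq hz hR).1

/-- The left side is the defect at `t` in the eigenvalue equation for the cut-off eigenfunction. The
bound splits it into the contributions of the two cuts, at `1` and at `R`; the squared `L²` norm of
each is independent of `R`, since `∫₀^∞ R / (R + t)² dt = 1`. -/
lemma cutoff_error {z : ℂ} (hz : z.re = 1 / 2) {R t : ℝ} (hR : 1 ≤ R) (ht : 0 < t) :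
    ‖(∫ s in Ioc 1 R, ((t + s)⁻¹ : ℝ) • (s : ℂ) ^ (z - 1))
      - Complex.Gamma z * Complex.Gamma (1 - z) * cutoff z R t‖
      ≤ 4 * (1 + t)⁻¹ + 4 * (√R * (R + t)⁻¹) := by
  have hR0 : 0 < R := zero_lt_one.trans_le hR
  have hsR : 0 < √R := Real.sqrt_pos.2 hR0
  have hpos1 : 0 ≤ 4 * (1 + t)⁻¹ := by positivity
  have hpos2 : 0 ≤ 4 * (√R * (R + t)⁻¹) := by positivity
  have big : ∀ {a : ℝ}, 0 < a → a ≤ t → 2 * √a / t ≤ 4 * (√a * (a + t)⁻¹) := by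
    intro a ha hat
    rw [← div_eq_mul_inv, mul_div_assoc', div_le_div_iff₀ ht (by positivity)]
    nlinarith [Real.sqrt_nonneg a, mul_le_mul_of_nonneg_left hat (Real.sqrt_nonneg a)]
  have small : ∀ {b : ℝ}, 0 < b → t ≤ b → 2 / √b ≤ 4 * (√b * (b + t)⁻¹) := by
    intro b hb htb
    rw [← div_eq_mul_inv, mul_div_assoc', div_le_div_iff₀ (Real.sqrt_pos.2 hb) (by positivity),
      mul_assoc, Real.mul_self_sqrt hb.le]
    linarith
  by_cases h1 : t ≤ 1
  · rw [cutoff, indicator_of_notMem (fun h => absurd h.1 h1.not_gt), mul_zero, sub_zero]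
    have := norm_integral_near_top hz ht zero_lt_one (measurableSet_Ioc (a := (1 : ℝ)) (b := R))
      Ioc_subset_Ioi_self
    have h2 := small zero_lt_one h1
    rw [Real.sqrt_one, one_mul] at h2
    rw [Real.sqrt_one] at this
    linarith
  rw [not_le] at h1
  by_cases h2 : t ≤ R
  · have hc : cutoff z R t = (t : ℂ) ^ (z - 1) :=
      indicator_of_mem (show t ∈ Ioc 1 R from ⟨h1, h2⟩) _
    have hint := stieltjes_integrable (z := z) (by rw [hz]; norm_num) (by rw [hz]; norm_num) ht
    have hst := stieltjes_integral (z := z) (by rw [hz]; norm_num) (by rw [hz]; norm_num) ht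
    have hI : IntegrableOn (fun s : ℝ => ((t + s)⁻¹ : ℝ) • (s : ℂ) ^ (z - 1)) (Ioi 0) := hint
    have d1 : ∫ s in Ioi (0 : ℝ), ((t + s)⁻¹ : ℝ) • (s : ℂ) ^ (z - 1)
        = (∫ s in Ioc (0 : ℝ) 1, ((t + s)⁻¹ : ℝ) • (s : ℂ) ^ (z - 1))
          + ∫ s in Ioi (1 : ℝ), ((t + s)⁻¹ : ℝ) • (s : ℂ) ^ (z - 1) := by
      rw [← Ioc_union_Ioi_eq_Ioi (zero_le_one' ℝ)]
      exact setIntegral_union Ioc_disjoint_Ioi_same measurableSet_Ioi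
        (hI.mono_set Ioc_subset_Ioi_self) (hI.mono_set (Ioi_subset_Ioi zero_le_one))
    have d2 : ∫ s in Ioi (1 : ℝ), ((t + s)⁻¹ : ℝ) • (s : ℂ) ^ (z - 1)
        = (∫ s in Ioc (1 : ℝ) R, ((t + s)⁻¹ : ℝ) • (s : ℂ) ^ (z - 1))
          + ∫ s in Ioi R, ((t + s)⁻¹ : ℝ) • (s : ℂ) ^ (z - 1) := by
      rw [← Ioc_union_Ioi_eq_Ioi hR]
      exact setIntegral_union Ioc_disjoint_Ioi_same measurableSet_Ioi
        (hI.mono_set Ioc_subset_pos) (hI.mono_set (Ioi_subset_Ioi hR0.le))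
    have b1 := norm_integral_near_zero hz ht zero_lt_one (measurableSet_Ioc (a := (0 : ℝ)) (b := 1))
      subset_rfl
    have b2 := norm_integral_near_top hz ht hR0 (measurableSet_Ioi (a := R)) subset_rfl
    have e1 := big zero_lt_one h1.le
    have e2 := small hR0 h2
    rw [Real.sqrt_one] at b1 e1
    rw [one_mul] at e1
    change ∫ s in Ioi (0 : ℝ), ((t + s)⁻¹ : ℝ) • (s : ℂ) ^ (z - 1) = _ at hst
    rw [hc, ← hst, d1, d2, ← norm_neg]
    refine le_trans (le_of_eq ?_) ((norm_add_le _ _).trans (add_le_add (b1.trans e1) (b2.trans e2)))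
    congr 1
    ring
  · rw [not_le] at h2
    rw [cutoff, indicator_of_notMem (fun h => absurd h.2 h2.not_ge), mul_zero, sub_zero]
    have := norm_integral_near_zero hz ht hR0 (measurableSet_Ioc (a := (1 : ℝ)) (b := R))
      (Ioc_subset_Ioc_left zero_le_one)
    linarith [big hR0 h2.le]

/-- As `R → ∞` the defect stays bounded while the norm grows like `(log R)^{1/2}`: the cut-off
eigenfunctions are, after normalization, approximate eigenvectors. -/
lemma approx_eigenvector (C : Lp ℂ 2 mu →L[ℂ] Lp ℂ 2 mu)
    (hC : ∀ f : Lp ℂ 2 mu,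
      (C f : ℝ → ℂ) =ᵐ[mu] fun t => ∫ s in Ioi (0 : ℝ), ((t + s)⁻¹ : ℝ) • f s)
    {z : ℂ} (hz : z.re = 1 / 2) {R : ℝ} (hR : 1 ≤ R) :
    ∃ f : Lp ℂ 2 mu, ‖f‖ ^ 2 = Real.log R ∧
      ‖C f - (Complex.Gamma z * Complex.Gamma (1 - z)) • f‖ ^ 2 ≤ 64 := by
  have hR0 : 0 < R := zero_lt_one.trans_le hR
  set l := Complex.Gamma z * Complex.Gamma (1 - z) with hl
  set f : Lp ℂ 2 mu := (cutoff_memLp hz hR).toLp with hf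
  have hfc : f =ᵐ[mu] cutoff z R := (cutoff_memLp hz hR).coeFn_toLp
  refine ⟨f, ?_, ?_⟩
  · rw [norm_sq_eq, ← (cutoff_integral_norm_sq hz hR).2]
    refine integral_congr_ae ?_
    filter_upwards [hfc] with s hs
    rw [hs]
  · obtain ⟨i1, v1⟩ := integral_div_add_sq zero_lt_one
    obtain ⟨i2, v2⟩ := integral_div_add_sq hR0
    rw [norm_sq_eq]
    have hv : ∫ t : ℝ, 32 * (1 / (1 + t) ^ 2 + R / (R + t) ^ 2) ∂mu = 64 := by
      rw [integral_const_mul, integral_add i1 i2, v1, v2]; norm_num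
    rw [← hv]
    refine integral_mono_ae (integrable_norm_sq _) ((i1.add i2).const_mul 32) ?_
    filter_upwards [hC f, hfc, ae_pos, Lp.coeFn_sub (C f) (l • f), Lp.coeFn_smul l f]
      with t h1 h2 ht h3 h4
    have hCf : C f t = ∫ s in Ioc 1 R, ((t + s)⁻¹ : ℝ) • (s : ℂ) ^ (z - 1) := by
      rw [h1, ← mu_restrict measurableSet_Ioc Ioc_subset_pos, ← integral_indicator measurableSet_Ioc]
      change ∫ s, _ ∂mu = _
      refine integral_congr_ae ?_
      filter_upwards [hfc] with s hs
      rw [hs, cutoff]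
      by_cases h : s ∈ Ioc 1 R <;> simp [h]
    rw [h3, Pi.sub_apply, h4, Pi.smul_apply, h2, hCf, smul_eq_mul]
    have he := cutoff_error hz hR ht
    rw [← hl] at he
    refine (pow_le_pow_left₀ (norm_nonneg _) he 2).trans ?_
    have hsq := Real.sq_sqrt hR0.le
    have e : ∀ a b : ℝ, (4 * a + 4 * b) ^ 2 ≤ 32 * (a ^ 2 + b ^ 2) := fun a b => by
      nlinarith [sq_nonneg (a - b)]
    refine (e _ _).trans (le_of_eq ?_)
    rw [mul_pow, hsq, one_div, div_eq_mul_inv R, inv_pow, inv_pow]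

/-- A bounded inverse of `Γ(z) Γ(1 - z) - C` would bound the norms of the vectors of
`approx_eigenvector`. -/
lemma mem_spectrum_of_half_line (C : Lp ℂ 2 mu →L[ℂ] Lp ℂ 2 mu)
    (hC : ∀ f : Lp ℂ 2 mu,
      (C f : ℝ → ℂ) =ᵐ[mu] fun t => ∫ s in Ioi (0 : ℝ), ((t + s)⁻¹ : ℝ) • f s)
    {z : ℂ} (hz : z.re = 1 / 2) :
    Complex.Gamma z * Complex.Gamma (1 - z) ∈ spectrum ℂ C := by
  set l := Complex.Gamma z * Complex.Gamma (1 - z) with hl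
  rw [spectrum.mem_iff]
  rintro ⟨u, hu⟩
  set B : Lp ℂ 2 mu →L[ℂ] Lp ℂ 2 mu := ↑u⁻¹ with hB
  have hBu : B * (algebraMap ℂ _ l - C) = 1 := by rw [← hu]; exact u.inv_mul
  -- a radius `R` for which `log R` exceeds the bound forced by the inverse
  obtain ⟨f, hf, hCf⟩ := approx_eigenvector C hC hz
    (Real.one_le_exp (x := ‖B‖ ^ 2 * 64 + 1) (by positivity))
  rw [Real.log_exp] at hf
  have h1 : f = B (l • f - C f) := by
    have := congrArg (fun T : Lp ℂ 2 mu →L[ℂ] Lp ℂ 2 mu => T f) hBu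
    simpa [Algebra.algebraMap_eq_smul_one] using this.symm
  have h2 : ‖f‖ ≤ ‖B‖ * ‖C f - l • f‖ := by
    rw [norm_sub_rev]
    conv_lhs => rw [h1]
    exact B.le_opNorm _
  have h3 := pow_le_pow_left₀ (norm_nonneg _) h2 2
  rw [mul_pow, hf] at h3
  nlinarith [mul_le_mul_of_nonneg_left hCf (sq_nonneg ‖B‖)]

/-! ### The spectrum -/

/-- The spectrum of the Carleman operator `C` (the bounded operator on
`L²((0,∞))` given by `(Cf)(t) = ∫₀^∞ (t+s)⁻¹ f(s) ds`) equals `[0, π] ⊆ ℝ ⊆ ℂ`. -/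
theorem carleman_spectrum (C : Lp ℂ 2 mu →L[ℂ] Lp ℂ 2 mu)
    (hC : ∀ f : Lp ℂ 2 mu,
      (C f : ℝ → ℂ) =ᵐ[mu] fun t => ∫ s in Ioi (0 : ℝ), ((t + s)⁻¹ : ℝ) • f s) :
    spectrum ℂ C = {z : ℂ | ∃ r : ℝ, z = (r : ℂ) ∧ 0 ≤ r ∧ r ≤ Real.pi} := by
  have hpos : ∀ r ∈ Ioc 0 Real.pi, (r : ℂ) ∈ spectrum ℂ C := by
    intro r hr
    -- `ξ` is chosen so that the eigenvalue `π / cosh (π ξ)` is `r`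
    have h := mem_spectrum_of_half_line C hC
      (z := 1 / 2 + ((Real.arcosh (Real.pi / r) / Real.pi : ℝ) : ℂ) * Complex.I) (by simp)
    rw [gamma_eq, mul_div_cancel₀ _ Real.pi_pos.ne',
      Real.cosh_arcosh ((one_le_div hr.1).2 hr.2), div_div_cancel₀ Real.pi_pos.ne'] at h
    exact h
  refine Subset.antisymm (fun z hz => spectrum_subset C hC hz) ?_
  rintro _ ⟨r, rfl, h0, h1⟩
  -- the spectrum is closed, which adds the endpoint `0`
  have hcl : IsClosed ((fun r : ℝ => (r : ℂ)) ⁻¹' spectrum ℂ C) :=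
    (spectrum.isClosed C).preimage Complex.continuous_ofReal
  have := hcl.closure_subset_iff.2 hpos
  rw [closure_Ioc Real.pi_pos.ne] at this
  exact this ⟨h0, h1⟩
end
end

section
/- For every t > 0 and every k ∈ ℝ, the integral ∫₀^∞ (t+s)⁻¹ s^{-1/2+ik} ds converges absolutely and equals (π / cosh(πk)) · t^{-1/2+ik}. (Here s^{w} = exp(w · ln s) for s > 0 and w ∈ ℂ.) In particular, taking k and −k, the functions t^{-1/2±ik} are generalized eigenfunctions of the Carleman kernel with eigenvalue λ(k) = π/cosh(πk). -/
/-!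
The substitution `s = t x / (1 - x)` maps `(0, 1)` bijectively onto `(0, ∞)`, with `t + s = t / (1 - x)`
and `ds = t / (1 - x)² dx`. It turns the integral of `(t + s)⁻¹ s ^ w`, with `w = -1/2 + ik`, into
`t ^ w` times the Beta integral `B(1/2 + ik, 1/2 - ik)`. The latter converges absolutely because both
parameters have real part `1/2`, and Euler's reflection formula evaluates it as
`π / sin (π (1/2 + ik)) = π / cosh (π k)`.
-/

open MeasureTheory Set

noncomputable section

/-- The image of the unit interval under the change of variables `x ↦ t x / (1 - x)`. -/
lemma image_mul_div_one_sub {t : ℝ} (ht : 0 < t) :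
    (fun x : ℝ => t * x / (1 - x)) '' Ioo 0 1 = Ioi 0 := by
  ext s
  constructor
  · rintro ⟨x, ⟨h0, h1⟩, rfl⟩
    exact div_pos (mul_pos ht h0) (sub_pos.2 h1)
  · intro (hs : 0 < s)
    have hts : 0 < t + s := by positivity
    refine ⟨s / (t + s), ⟨by positivity, (div_lt_one hts).2 (by linarith)⟩, ?_⟩
    have h : 1 - s / (t + s) = t / (t + s) := by field_simp; ring
    simp only [h]
    field_simp

lemma injOn_mul_div_one_sub {t : ℝ} (ht : 0 < t) :
    InjOn (fun x : ℝ => t * x / (1 - x)) (Ioo 0 1) := by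
  rintro x ⟨-, hx⟩ y ⟨-, hy⟩ h
  have hx' : 1 - x ≠ 0 := by linarith
  have hy' : 1 - y ≠ 0 := by linarith
  simp only at h
  rw [div_eq_div_iff hx' hy'] at h
  have h2 : t * (x - y) = 0 := by linear_combination h
  rcases mul_eq_zero.1 h2 with h3 | h3 <;> linarith

lemma hasDerivAt_mul_div_one_sub (t : ℝ) {x : ℝ} (hx : x < 1) :
    HasDerivAt (fun x : ℝ => t * x / (1 - x)) (t / (1 - x) ^ 2) x := by
  have hx' : 1 - x ≠ 0 := by linarith
  have h := ((hasDerivAt_id x).const_mul t).div ((hasDerivAt_id x).const_sub 1) hx'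
  refine h.congr_deriv ?_
  simp only [id]
  field_simp
  ring

/-- Under `s = t x / (1 - x)`, the Jacobian times `(t + s)⁻¹ s ^ w` is `t ^ w` times the integrand of
the Beta function with parameters `w + 1` and `-w`. -/
lemma pullback_eq {t : ℝ} (ht : 0 < t) (w : ℂ) {x : ℝ} (h0 : 0 < x) (h1 : x < 1) :
    |t / (1 - x) ^ 2| • ((((t + t * x / (1 - x))⁻¹ : ℝ) : ℂ) *
        Complex.exp (w * (Real.log (t * x / (1 - x)) : ℂ)))
      = Complex.exp (w * (Real.log t : ℂ)) *
        ((x : ℂ) ^ (w + 1 - 1) * (1 - (x : ℂ)) ^ (-w - 1)) := by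
  have hx : 0 < 1 - x := by linarith
  have hc : (1 - (x : ℂ)) = ((1 - x : ℝ) : ℂ) := by push_cast; rfl
  have hne : ((1 - x : ℝ) : ℂ) ≠ 0 := by exact_mod_cast hx.ne'
  have hj : t / (1 - x) ^ 2 * (t + t * x / (1 - x))⁻¹ = (1 - x)⁻¹ := by
    have : t + t * x / (1 - x) = t / (1 - x) := by field_simp; ring
    rw [this]
    field_simp
  rw [abs_of_pos (by positivity), Complex.real_smul, ← mul_assoc, ← Complex.ofReal_mul, hj, hc,
    add_sub_cancel_right, Complex.cpow_sub _ _ hne, Complex.cpow_one,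
    Complex.cpow_def_of_ne_zero (by exact_mod_cast h0.ne'), Complex.cpow_def_of_ne_zero hne,
    ← Complex.ofReal_log h0.le, ← Complex.ofReal_log hx.le,
    Real.log_div (by positivity) hx.ne', Real.log_mul ht.ne' h0.ne']
  have he : w * ((Real.log t + Real.log x - Real.log (1 - x) : ℝ) : ℂ)
      = w * (Real.log t : ℂ) + Real.log x * w + Real.log (1 - x) * -w := by
    push_cast; ring
  rw [he, Complex.exp_add, Complex.exp_add, Complex.ofReal_inv]
  ring

/-- Euler's reflection formula at `1/2 + ik`, where `sin (π (1/2 + ik)) = cosh (π k)`. -/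
lemma betaIntegral_critical (k : ℝ) :
    Complex.betaIntegral (-(1/2 : ℂ) + Complex.I * k + 1) (-(-(1/2 : ℂ) + Complex.I * k))
      = ((Real.pi / Real.cosh (Real.pi * k) : ℝ) : ℂ) := by
  have h := Complex.Gamma_mul_Gamma_eq_betaIntegral
    (s := -(1/2 : ℂ) + Complex.I * k + 1) (t := -(-(1/2 : ℂ) + Complex.I * k))
    (by norm_num) (by norm_num)
  have h1 : -(1/2 : ℂ) + Complex.I * k + 1 + -(-(1/2 : ℂ) + Complex.I * k) = 1 := by ring
  have h2 : -(-(1/2 : ℂ) + Complex.I * k) = 1 - (-(1/2 : ℂ) + Complex.I * k + 1) := by ring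
  rw [h1, Complex.Gamma_one, one_mul] at h
  rw [← h, h2, Complex.Gamma_mul_Gamma_one_sub]
  have h3 : (Real.pi : ℂ) * (-(1/2 : ℂ) + Complex.I * k + 1)
      = (Real.pi * k : ℂ) * Complex.I + Real.pi / 2 := by ring
  rw [h3, Complex.sin_add_pi_div_two, Complex.cos_mul_I]
  push_cast
  rfl

/-- For `t > 0` and `k ∈ ℝ`, `∫₀^∞ (t+s)⁻¹ s^{-1/2+ik} ds` converges
absolutely and equals `(π / cosh(πk)) · t^{-1/2+ik}`, where `s^w = exp(w · ln s)`. -/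
theorem carleman_generalized_eigenfunctions (t : ℝ) (ht : 0 < t) (k : ℝ) :
    IntegrableOn (fun s : ℝ =>
        (((t + s)⁻¹ : ℝ) : ℂ) * Complex.exp ((-(1/2 : ℂ) + Complex.I * (k : ℂ)) * (Real.log s : ℂ)))
      (Ioi (0 : ℝ)) ∧
    ∫ s in Ioi (0 : ℝ),
        (((t + s)⁻¹ : ℝ) : ℂ) * Complex.exp ((-(1/2 : ℂ) + Complex.I * (k : ℂ)) * (Real.log s : ℂ))
      = ((Real.pi / Real.cosh (Real.pi * k) : ℝ) : ℂ) *
          Complex.exp ((-(1/2 : ℂ) + Complex.I * (k : ℂ)) * (Real.log t : ℂ)) := by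
  have hd : ∀ x ∈ Ioo (0 : ℝ) 1, HasDerivWithinAt (fun x : ℝ => t * x / (1 - x))
      (t / (1 - x) ^ 2) (Ioo 0 1) x :=
    fun x hx => (hasDerivAt_mul_div_one_sub t hx.2).hasDerivWithinAt
  have hinj := injOn_mul_div_one_sub ht
  rw [← betaIntegral_critical, ← image_mul_div_one_sub ht,
    integrableOn_image_iff_integrableOn_abs_deriv_smul measurableSet_Ioo hd hinj,
    integral_image_eq_integral_abs_deriv_smul measurableSet_Ioo hd hinj]
  have hconv := Complex.betaIntegral_convergent
    (u := -(1/2 : ℂ) + Complex.I * k + 1) (v := -(-(1/2 : ℂ) + Complex.I * k))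
    (by norm_num) (by norm_num)
  rw [intervalIntegrable_iff_integrableOn_Ioo_of_le zero_le_one] at hconv
  constructor
  · exact IntegrableOn.congr_fun (Integrable.const_mul hconv _)
      (fun x hx => (pullback_eq ht _ hx.1 hx.2).symm) measurableSet_Ioo
  · rw [setIntegral_congr_fun measurableSet_Ioo (fun x hx => pullback_eq ht _ hx.1 hx.2),
      integral_const_mul, mul_comm, Complex.betaIntegral,
      intervalIntegral.integral_of_le zero_le_one, integral_Ioc_eq_integral_Ioo]
end
end

section
/- Let f : (0,∞) → ℂ be measurable with ∫₀^∞ s^{-1/2} |f(s)| ds < ∞. Then for every t > 0 the integral (Cf)(t) = ∫₀^∞ (t+s)⁻¹ f(s) ds converges absolutely, ∫₀^∞ t^{-1/2} |(Cf)(t)| dt < ∞, and for every k ∈ ℝ one has ∫₀^∞ t^{-1/2-ik} (Cf)(t) dt = (π / cosh(πk)) · ∫₀^∞ s^{-1/2-ik} f(s) ds. In other words, the Mellin transform diagonalizes the Carleman operator: M(Cf)(k) = λ(k) (Mf)(k) with λ(k) = π/cosh(πk). -/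
/-!
Write `W k t = t ^ (-1/2 - ik)`. The function `W k` is multiplicative on `(0, ∞)`, so the scaling
`t = s u` gives `∫₀^∞ W k t / (t + s) dt = W k s * ∫₀^∞ W k u / (1 + u) du`
(`integral_melW_div`). The substitution `x = u / (1 + u)` turns the last integral into the Beta
integral `B(1/2 - ik, 1/2 + ik)`, which by Euler's reflection formula is
`π / sin (π (1/2 - ik)) = π / cosh (π k)` (`beta_kernel`). The same scaling applied to
`‖W k t‖ = t ^ (-1/2)` shows that `W k t * (t + s)⁻¹ * f s` is absolutely integrable on
`(0, ∞)²` (`integrable_melH`), and the theorem follows from Fubini's theorem. Pointwise convergence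
of the Carleman integral comes from `(t + s)⁻¹ ≤ t ^ (-1/2) * s ^ (-1/2)`.
-/

open MeasureTheory Set

noncomputable section

/-- The Mellin kernel `t ^ (-1/2 - ik)` for `t > 0`, written through `Real.log`. -/
def melW (k t : ℝ) : ℂ :=
  Complex.exp ((-(1/2 : ℂ) - Complex.I * (k : ℂ)) * (Real.log t : ℂ))

lemma measurable_melW (k : ℝ) : Measurable (melW k) := by
  unfold melW; fun_prop

lemma melW_mul (k : ℝ) {s t : ℝ} (hs : 0 < s) (ht : 0 < t) :
    melW k (s * t) = melW k s * melW k t := by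
  unfold melW
  rw [Real.log_mul hs.ne' ht.ne', ← Complex.exp_add]
  push_cast
  ring_nf

lemma norm_melW (k : ℝ) {t : ℝ} (ht : 0 < t) : ‖melW k t‖ = t ^ (-(1/2) : ℝ) := by
  unfold melW
  rw [Complex.norm_exp, Real.rpow_def_of_pos ht]
  congr 1
  simp [Complex.mul_re]
  ring

lemma image_div_one_add : (fun t : ℝ => t / (1 + t)) '' Ioi 0 = Ioo 0 1 := by
  ext x
  constructor
  · rintro ⟨t, ht, rfl⟩
    have ht : 0 < t := ht
    exact ⟨by positivity, by simp only; rw [div_lt_one (by positivity)]; linarith⟩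
  · rintro ⟨h0, h1⟩
    have : 0 < 1 - x := by linarith
    exact ⟨x / (1 - x), div_pos h0 this, by field_simp; ring⟩

/-- The Beta integrand with exponents `1/2 - ik`, `1/2 + ik`, pulled back along
`t ↦ t / (1 + t)` and multiplied by the Jacobian `(1 + t)⁻²`. -/
lemma beta_pullback (k : ℝ) {t : ℝ} (ht : 0 < t) :
    |1 / (1 + t) ^ 2| • (((t / (1 + t) : ℝ) : ℂ) ^ ((1/2 - Complex.I * k) - 1) *
      (1 - ((t / (1 + t) : ℝ) : ℂ)) ^ ((1/2 + Complex.I * k) - 1)) =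
    melW k t * ((1 + t)⁻¹ : ℝ) := by
  have h1 : 0 < 1 + t := by linarith
  have e : (1 : ℂ) - ((t / (1 + t) : ℝ) : ℂ) = (((1 + t)⁻¹ : ℝ) : ℂ) := by
    rw [← Complex.ofReal_one, ← Complex.ofReal_sub]
    congr 1; field_simp; ring
  have hx : ((t / (1 + t) : ℝ) : ℂ) ≠ 0 := Complex.ofReal_ne_zero.2 (by positivity)
  have hy : (((1 + t)⁻¹ : ℝ) : ℂ) ≠ 0 := Complex.ofReal_ne_zero.2 (by positivity)
  have hj : |1 / (1 + t) ^ 2| = Real.exp (-2 * Real.log (1 + t)) := by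
    rw [abs_of_pos (by positivity), show -2 * Real.log (1 + t) = -(2 * Real.log (1 + t)) by ring,
      Real.exp_neg, two_mul, Real.exp_add, Real.exp_log h1]
    field_simp
  have hi : (1 + t)⁻¹ = Real.exp (-Real.log (1 + t)) := by
    rw [Real.exp_neg, Real.exp_log h1]
  rw [e, hj, Complex.real_smul, Complex.cpow_def_of_ne_zero hx, Complex.cpow_def_of_ne_zero hy,
    ← Complex.ofReal_log (by positivity), ← Complex.ofReal_log (by positivity),
    Real.log_div ht.ne' h1.ne', Real.log_inv, hi, melW]
  push_cast
  simp only [← Complex.exp_add]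
  congr 1
  ring

lemma hasDerivWithinAt_div_one_add (t : ℝ) (ht : t ∈ Ioi (0 : ℝ)) :
    HasDerivWithinAt (fun t : ℝ => t / (1 + t)) (1 / (1 + t) ^ 2) (Ioi 0) t := by
  have ht : 0 < t := ht
  have := ((hasDerivAt_id t).div ((hasDerivAt_id t).const_add 1)
    (show (1 : ℝ) + t ≠ 0 by positivity)).hasDerivWithinAt (s := Ioi 0)
  have e : (1 : ℝ) / (1 + t) ^ 2 = (1 * (1 + id t) - id t * 1) / (1 + id t) ^ 2 := by simp
  rw [e]
  exact this

lemma injOn_div_one_add : InjOn (fun t : ℝ => t / (1 + t)) (Ioi 0) := by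
  intro a ha b hb h
  have ha : 0 < a := ha
  have hb : 0 < b := hb
  have h : a / (1 + a) = b / (1 + b) := h
  rw [div_eq_div_iff (by positivity) (by positivity)] at h
  linarith

lemma beta_kernel (k : ℝ) :
    IntegrableOn (fun t : ℝ => melW k t * ((1 + t)⁻¹ : ℝ)) (Ioi 0) ∧
    ∫ t in Ioi (0 : ℝ), melW k t * ((1 + t)⁻¹ : ℝ) =
      ((Real.pi / Real.cosh (Real.pi * k) : ℝ) : ℂ) := by
  set u : ℂ := 1/2 - Complex.I * k with hu
  set v : ℂ := 1/2 + Complex.I * k with hv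
  have hur : 0 < u.re := by simp [hu]
  have hvr : 0 < v.re := by simp [hv]
  set g : ℝ → ℂ := fun x => (x : ℂ) ^ (u - 1) * (1 - (x : ℂ)) ^ (v - 1) with hg
  have hpb : ∀ t ∈ Ioi (0 : ℝ), |1 / (1 + t) ^ 2| • g (t / (1 + t)) =
      melW k t * ((1 + t)⁻¹ : ℝ) := fun t ht => beta_pullback k ht
  constructor
  · rw [← integrableOn_congr_fun hpb measurableSet_Ioi,
      ← integrableOn_image_iff_integrableOn_abs_deriv_smul measurableSet_Ioi
        hasDerivWithinAt_div_one_add injOn_div_one_add, image_div_one_add]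
    exact ((intervalIntegrable_iff_integrableOn_Ioo_of_le zero_le_one).1
      (Complex.betaIntegral_convergent hur hvr))
  · rw [← setIntegral_congr_fun measurableSet_Ioi hpb,
      ← integral_image_eq_integral_abs_deriv_smul measurableSet_Ioi
        hasDerivWithinAt_div_one_add injOn_div_one_add, image_div_one_add,
      ← integral_Ioc_eq_integral_Ioo, ← intervalIntegral.integral_of_le zero_le_one]
    change Complex.betaIntegral u v = _
    have h1 := Complex.Gamma_mul_Gamma_eq_betaIntegral hur hvr
    have huv : u + v = 1 := by rw [hu, hv]; ring
    rw [huv, Complex.Gamma_one, one_mul] at h1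
    rw [← h1, show v = 1 - u by rw [← huv]; ring, Complex.Gamma_mul_Gamma_one_sub]
    push_cast
    congr 1
    rw [hu, ← Complex.cos_mul_I, ← Complex.sin_pi_div_two_sub]
    congr 1
    ring

/-- The scaling `t = s u` in the integrand `W k t / (t + s)`. -/
lemma melW_scale (k : ℝ) {s u : ℝ} (hs : 0 < s) (hu : 0 < u) :
    melW k (s * u) * ((s * u + s)⁻¹ : ℝ) =
      (s⁻¹ : ℝ) • (melW k s * (melW k u * ((1 + u)⁻¹ : ℝ))) := by
  rw [melW_mul k hs hu, show s * u + s = s * (1 + u) by ring, mul_inv, Complex.real_smul]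
  push_cast
  ring

lemma integrableOn_melW_div (k : ℝ) {s : ℝ} (hs : 0 < s) :
    IntegrableOn (fun t : ℝ => melW k t * ((t + s)⁻¹ : ℝ)) (Ioi 0) := by
  have h := integrableOn_Ioi_comp_mul_left_iff
    (fun t : ℝ => melW k t * ((t + s)⁻¹ : ℝ)) 0 hs
  rw [mul_zero] at h
  rw [← h, integrableOn_congr_fun (s := Ioi (0 : ℝ))
    (fun u hu => melW_scale k hs hu) measurableSet_Ioi]
  exact Integrable.smul (s⁻¹ : ℝ) ((beta_kernel k).1.const_mul (melW k s))

/-- `W k` is a generalized eigenfunction of the Carleman operator. -/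
lemma integral_melW_div (k : ℝ) {s : ℝ} (hs : 0 < s) :
    ∫ t in Ioi (0 : ℝ), melW k t * ((t + s)⁻¹ : ℝ) =
      melW k s * ((Real.pi / Real.cosh (Real.pi * k) : ℝ) : ℂ) := by
  have h := integral_comp_mul_left_Ioi'
    (fun t : ℝ => melW k t * ((t + s)⁻¹ : ℝ)) 0 hs
  rw [mul_zero] at h
  rw [← h, setIntegral_congr_fun measurableSet_Ioi (fun u hu => melW_scale k hs hu),
    integral_smul, integral_const_mul, (beta_kernel k).2, smul_smul, mul_inv_cancel₀ hs.ne',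
    one_smul]

lemma integral_norm_melW_div (k : ℝ) {s : ℝ} (hs : 0 < s) :
    ∫ t in Ioi (0 : ℝ), ‖melW k t * ((t + s)⁻¹ : ℝ)‖ =
      s ^ (-(1/2) : ℝ) * ∫ u in Ioi (0 : ℝ), ‖melW k u * ((1 + u)⁻¹ : ℝ)‖ := by
  have h := integral_comp_mul_left_Ioi'
    (fun t : ℝ => ‖melW k t * ((t + s)⁻¹ : ℝ)‖) 0 hs
  rw [mul_zero] at h
  have e : ∀ u ∈ Ioi (0 : ℝ), ‖melW k (s * u) * ((s * u + s)⁻¹ : ℝ)‖ =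
      s⁻¹ • (s ^ (-(1/2) : ℝ) * ‖melW k u * ((1 + u)⁻¹ : ℝ)‖) := fun u hu => by
    rw [melW_scale k hs hu, norm_smul, norm_mul, norm_melW k hs, Real.norm_of_nonneg (by positivity),
      smul_eq_mul]
  rw [← h, setIntegral_congr_fun measurableSet_Ioi e,
    integral_smul, integral_const_mul, smul_smul, mul_inv_cancel₀ hs.ne', one_smul]

/-- Absolute convergence of the double integral, which justifies Fubini's theorem. -/
lemma integrable_melH (k : ℝ) (f : ℝ → ℂ) (hfm : Measurable f)
    (hf : IntegrableOn (fun s : ℝ => s ^ (-(1/2) : ℝ) * ‖f s‖) (Ioi (0 : ℝ))) :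
    Integrable (fun p : ℝ × ℝ => melW k p.1 * ((p.1 + p.2)⁻¹ : ℝ) * f p.2)
      ((volume.restrict (Ioi 0)).prod (volume.restrict (Ioi 0))) := by
  have hm : Measurable (fun p : ℝ × ℝ => melW k p.1 * ((p.1 + p.2)⁻¹ : ℝ) * f p.2) := by
    have := measurable_melW k
    fun_prop
  rw [integrable_prod_iff' hm.aestronglyMeasurable]
  constructor
  · filter_upwards [ae_restrict_mem measurableSet_Ioi] with s hs
    exact (integrableOn_melW_div k hs).mul_const _
  · refine (integrableOn_congr_fun (fun s hs => ?_) measurableSet_Ioi).1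
      (hf.mul_const (∫ u in Ioi (0 : ℝ), ‖melW k u * ((1 + u)⁻¹ : ℝ)‖))
    simp only [norm_mul (_ * _) (f s)]
    rw [integral_mul_const, integral_norm_melW_div k hs]
    ring

lemma inv_add_le {s t : ℝ} (hs : 0 < s) (ht : 0 < t) :
    (t + s)⁻¹ ≤ t ^ (-(1/2) : ℝ) * s ^ (-(1/2) : ℝ) := by
  rw [← Real.mul_rpow ht.le hs.le, Real.rpow_neg (by positivity), ← Real.sqrt_eq_rpow]
  refine inv_anti₀ (by positivity) (Real.sqrt_le_iff.2 ⟨by positivity, ?_⟩)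
  nlinarith [mul_pos hs ht, sq_nonneg s, sq_nonneg t]

/-- The Mellin transform diagonalizes the Carleman operator:
for `f` with `∫₀^∞ s^{-1/2}|f(s)| ds < ∞`, the Carleman integral `(Cf)(t)` converges absolutely
for every `t > 0`, satisfies `∫₀^∞ t^{-1/2}|(Cf)(t)| dt < ∞`, and
`∫₀^∞ t^{-1/2-ik}(Cf)(t) dt = (π/cosh(πk)) ∫₀^∞ s^{-1/2-ik} f(s) ds` for all `k ∈ ℝ`. -/
theorem mellin_diagonalizes_carleman (f : ℝ → ℂ) (hfm : Measurable f)
    (hf : IntegrableOn (fun s : ℝ => s ^ (-(1/2) : ℝ) * ‖f s‖) (Ioi (0 : ℝ))) :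
    (∀ t ∈ Ioi (0 : ℝ), IntegrableOn (fun s : ℝ => ((t + s)⁻¹ : ℝ) • f s) (Ioi (0 : ℝ))) ∧
    IntegrableOn (fun t : ℝ =>
      t ^ (-(1/2) : ℝ) * ‖∫ s in Ioi (0 : ℝ), ((t + s)⁻¹ : ℝ) • f s‖) (Ioi (0 : ℝ)) ∧
    ∀ k : ℝ,
      ∫ t in Ioi (0 : ℝ),
          Complex.exp ((-(1/2 : ℂ) - Complex.I * (k : ℂ)) * (Real.log t : ℂ)) *
            ∫ s in Ioi (0 : ℝ), ((t + s)⁻¹ : ℝ) • f s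
        = ((Real.pi / Real.cosh (Real.pi * k) : ℝ) : ℂ) *
            ∫ s in Ioi (0 : ℝ),
              Complex.exp ((-(1/2 : ℂ) - Complex.I * (k : ℂ)) * (Real.log s : ℂ)) * f s := by
  have hH : ∀ k t : ℝ, (∫ s in Ioi (0 : ℝ), melW k t * ((t + s)⁻¹ : ℝ) * f s) =
      melW k t * ∫ s in Ioi (0 : ℝ), ((t + s)⁻¹ : ℝ) • f s := fun k t => by
    rw [← integral_const_mul]
    simp only [Complex.real_smul, mul_assoc]
  refine ⟨fun t ht => ?_, ?_, fun k => ?_⟩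
  · have ht : 0 < t := ht
    refine Integrable.mono' (hf.const_mul (t ^ (-(1/2) : ℝ)))
      (by fun_prop : Measurable fun s : ℝ => ((t + s)⁻¹ : ℝ) • f s).aestronglyMeasurable ?_
    filter_upwards [ae_restrict_mem measurableSet_Ioi] with s hs
    have hs : 0 < s := hs
    rw [norm_smul, Real.norm_of_nonneg (by positivity), ← mul_assoc]
    exact mul_le_mul_of_nonneg_right (inv_add_le hs ht) (norm_nonneg _)
  · refine (integrableOn_congr_fun (fun t ht => ?_) measurableSet_Ioi).1
      (integrable_melH 0 f hfm hf).integral_prod_left.norm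
    simp only
    rw [hH, norm_mul, norm_melW 0 ht]
  · change ∫ t in Ioi (0 : ℝ), melW k t * (∫ s in Ioi (0 : ℝ), ((t + s)⁻¹ : ℝ) • f s) =
      _ * ∫ s in Ioi (0 : ℝ), melW k s * f s
    simp only [← hH]
    rw [integral_integral_swap (integrable_melH k f hfm hf), ← integral_const_mul]
    refine setIntegral_congr_fun measurableSet_Ioi fun s hs => ?_
    rw [integral_mul_const, integral_melW_div k hs]
    ring
end
end

section
/- There exists a constant C > 0 such that for all θ ∈ [0, 1/2) and all u > 0 with u ≠ 1: | (u^θ − 1)/(1 − u²) + (u^{−θ} − 1)/(1 − u⁻²) | ≤ C · θ · (1 + |ln u|). -/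
/-!
The expression is invariant under `u ↦ u⁻¹`, which swaps its two summands, so `u > 1` may be
assumed. Then both summands are nonpositive. Bernoulli's inequality `u ^ θ - 1 ≤ θ (u - 1)` bounds
the first by `θ / (u + 1) ≤ θ` in absolute value; the inequality `1 - u ^ (-θ) ≤ θ log u`, together
with `u² / (u² - 1) = 1 + 1 / (u² - 1)` and `log u ≤ u - 1`, bounds the second by
`θ (log u + 1 / (u + 1))`. Hence `C = 2` works.
-/

open MeasureTheory Set

noncomputable section

/-- The estimate on one side of the singularity `u = 1`. -/
lemma rho_tilde_bound_of_one_lt {θ u : ℝ} (h0 : 0 ≤ θ) (h1 : θ < 1/2) (hu : 1 < u) :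
    |(u ^ θ - 1) / (1 - u ^ 2) + (u ^ (-θ) - 1) / (1 - (u ^ 2)⁻¹)|
      ≤ 2 * θ * (1 + |Real.log u|) := by
  have hpos : 0 < u := by linarith
  have hl : 0 ≤ Real.log u := Real.log_nonneg hu.le
  have hl1 : Real.log u ≤ u - 1 := Real.log_le_sub_one_of_pos hpos
  have ha : u ^ θ - 1 ≤ θ * (u - 1) := by
    have := rpow_one_add_le_one_add_mul_self (s := u - 1) (p := θ)
      (by linarith) h0 (by linarith)
    rw [add_sub_cancel] at this
    linarith
  have ha0 : 1 ≤ u ^ θ := Real.one_le_rpow hu.le h0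
  have hb : 1 - u ^ (-θ) ≤ θ * Real.log u := by
    rw [Real.rpow_def_of_pos hpos]
    linarith [Real.add_one_le_exp (Real.log u * -θ)]
  have hb0 : u ^ (-θ) ≤ 1 := Real.rpow_le_one_of_one_le_of_nonpos hu.le (by linarith)
  have hd : 0 < u ^ 2 - 1 := by nlinarith
  have key : (u ^ θ - 1) / (1 - u ^ 2) + (u ^ (-θ) - 1) / (1 - (u ^ 2)⁻¹)
      = -((u ^ θ - 1) / (u ^ 2 - 1) + (1 - u ^ (-θ)) * (u ^ 2 / (u ^ 2 - 1))) := by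
    have e1 : (1 - u ^ 2 : ℝ) = -(u ^ 2 - 1) := by ring
    have e2 : (1 - (u ^ 2)⁻¹ : ℝ) = (u ^ 2 - 1) / u ^ 2 := by field_simp
    rw [e1, e2, div_neg, div_div_eq_mul_div, mul_div_assoc]
    ring
  have hA : (u ^ θ - 1) / (u ^ 2 - 1) ≤ θ := by
    rw [div_le_iff₀ hd]
    refine ha.trans (mul_le_mul_of_nonneg_left ?_ h0)
    nlinarith
  have hB : (1 - u ^ (-θ)) * (u ^ 2 / (u ^ 2 - 1)) ≤ θ * (Real.log u + 1) := by
    have hlog : Real.log u * (u ^ 2 / (u ^ 2 - 1)) ≤ Real.log u + 1 := by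
      rw [← mul_div_assoc, div_le_iff₀ hd]
      nlinarith
    calc _ ≤ θ * Real.log u * (u ^ 2 / (u ^ 2 - 1)) :=
          mul_le_mul_of_nonneg_right hb (by positivity)
      _ = θ * (Real.log u * (u ^ 2 / (u ^ 2 - 1))) := by ring
      _ ≤ _ := mul_le_mul_of_nonneg_left hlog h0
  have hA0 : 0 ≤ (u ^ θ - 1) / (u ^ 2 - 1) := div_nonneg (by linarith) hd.le
  have hB0 : 0 ≤ (1 - u ^ (-θ)) * (u ^ 2 / (u ^ 2 - 1)) :=
    mul_nonneg (by linarith) (by positivity)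
  rw [key, abs_neg, abs_of_nonneg (by linarith), abs_of_nonneg hl]
  nlinarith [mul_nonneg h0 hl]

/-- Uniform estimate `|ρ̃(u;θ)| ≤ C θ (1 + |ln u|)` for
`ρ̃(u;θ) = (u^θ − 1)/(1 − u²) + (u^{−θ} − 1)/(1 − u⁻²)`, `θ ∈ [0, 1/2)`, `u > 0`, `u ≠ 1`. -/
theorem rho_tilde_estimate :
    ∃ C : ℝ, 0 < C ∧ ∀ θ : ℝ, 0 ≤ θ → θ < 1/2 → ∀ u : ℝ, 0 < u → u ≠ 1 →
      |(u ^ θ - 1) / (1 - u ^ 2) + (u ^ (-θ) - 1) / (1 - (u ^ 2)⁻¹)|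
        ≤ C * θ * (1 + |Real.log u|) := by
  refine ⟨2, two_pos, fun θ h0 h1 u hu hne => ?_⟩
  rcases lt_or_gt_of_ne hne with h | h
  · have := rho_tilde_bound_of_one_lt h0 h1 ((one_lt_inv₀ hu).2 h)
    rw [Real.log_inv, abs_neg, Real.inv_rpow hu.le, Real.inv_rpow hu.le, ← Real.rpow_neg hu.le,
      ← Real.rpow_neg hu.le, neg_neg, inv_pow, inv_inv, add_comm] at this
    exact this
  · exact rho_tilde_bound_of_one_lt h0 h1 h
end
end
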